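/- The ℂ-linear span of the ten functions θ⁴[δ₁], …, θ⁴[δ₁₀] (the fourth powers of the even theta constants, viewed as functions on H₂) has dimension exactly 5. -/

import Mathlib

open scoped BigOperators

namespace TwoLoop

/-- 2×2 complex matrices. -/
abbrev Mat2 := Matrix (Fin 2) (Fin 2) ℂ

/-- The genus-2 Siegel upper half space: symmetric 2×2 complex matrices with
positive definite imaginary part. -/
def SiegelH2 : Set Mat2 := {τ | τ.transpose = τ ∧ (τ.map Complex.im).PosDef}

/-- A (half-integer) theta characteristic `[a;b]`, recorded by its rows `a, b ∈ {0,1}²`. -/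
abbrev Char := (Fin 2 → ℤ) × (Fin 2 → ℤ)

/-- The theta constant `θ[a;b](τ) = Σ_{n ∈ ℤ²} exp(πi (n+a/2)ᵀ τ (n+a/2) + πi (n+a/2)·b)`. -/
noncomputable def theta (κ : Char) (τ : Mat2) : ℂ :=
  ∑' n : Fin 2 → ℤ,
    Complex.exp ((Real.pi : ℂ) * Complex.I *
      ((∑ i, ∑ j, ((n i : ℂ) + (κ.1 i : ℂ) / 2) * τ i j * ((n j : ℂ) + (κ.1 j : ℂ) / 2))
        + ∑ i, ((n i : ℂ) + (κ.1 i : ℂ) / 2) * (κ.2 i : ℂ)))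

/-- The ten even characteristics δ₁,…,δ₁₀. -/
def δev : Fin 10 → Char :=
  ![(![0,0], ![0,0]), (![0,0], ![0,1]), (![0,0], ![1,0]), (![0,0], ![1,1]),
    (![0,1], ![0,0]), (![0,1], ![1,0]), (![1,0], ![0,0]), (![1,0], ![0,1]),
    (![1,1], ![0,0]), (![1,1], ![1,1])]

/-- The six odd characteristics ν₁,…,ν₆. -/
def νodd : Fin 6 → Char :=
  ![(![0,1], ![0,1]), (![1,0], ![1,0]), (![0,1], ![1,1]),
    (![1,0], ![1,1]), (![1,1], ![0,1]), (![1,1], ![1,0])]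

/-- `Θ[ε](τ) = θ[ε;0](2τ)`. -/
noncomputable def Θf (ε : Fin 2 → ℤ) (τ : Mat2) : ℂ := theta (ε, ![0,0]) ((2 : ℂ) • τ)

noncomputable def P0 (τ : Mat2) : ℂ :=
  Θf ![0,0] τ ^ 4 + Θf ![0,1] τ ^ 4 + Θf ![1,0] τ ^ 4 + Θf ![1,1] τ ^ 4
noncomputable def P1 (τ : Mat2) : ℂ :=
  2 * (Θf ![0,0] τ ^ 2 * Θf ![0,1] τ ^ 2 + Θf ![1,0] τ ^ 2 * Θf ![1,1] τ ^ 2)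
noncomputable def P2 (τ : Mat2) : ℂ :=
  2 * (Θf ![0,0] τ ^ 2 * Θf ![1,0] τ ^ 2 + Θf ![0,1] τ ^ 2 * Θf ![1,1] τ ^ 2)
noncomputable def P3 (τ : Mat2) : ℂ :=
  2 * (Θf ![0,0] τ ^ 2 * Θf ![1,1] τ ^ 2 + Θf ![0,1] τ ^ 2 * Θf ![1,0] τ ^ 2)
noncomputable def P4 (τ : Mat2) : ℂ :=
  4 * (Θf ![0,0] τ * Θf ![0,1] τ * Θf ![1,0] τ * Θf ![1,1] τ)

/-- The vector `(P₀,…,P₄)`. -/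
noncomputable def Pv : Fin 5 → Mat2 → ℂ := ![P0, P1, P2, P3, P4]

open MvPolynomial in
/-- The Igusa quartic as a polynomial in `x₀,…,x₄`. -/
noncomputable def I4poly : MvPolynomial (Fin 5) ℂ :=
  X 4 ^ 4 + X 4 ^ 2 * X 0 ^ 2 - X 4 ^ 2 * X 1 ^ 2 - X 4 ^ 2 * X 2 ^ 2 - X 4 ^ 2 * X 3 ^ 2
    + X 1 ^ 2 * X 2 ^ 2 + X 1 ^ 2 * X 3 ^ 2 + X 2 ^ 2 * X 3 ^ 2
    - 2 * (X 0 * X 1 * X 2 * X 3)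

/-- The signature `⟨κ|λ⟩ = exp(πi(a_κ·b_λ − b_κ·a_λ))`. -/
noncomputable def sig (κ lam : Char) : ℂ :=
  Complex.exp ((Real.pi : ℂ) * Complex.I *
    (((∑ i, κ.1 i * lam.2 i : ℤ) : ℂ) - ((∑ i, κ.2 i * lam.1 i : ℤ) : ℂ)))

/-- Componentwise mod-2 sum of characteristics. -/
def addChar (κ lam : Char) : Char :=
  (fun i => (κ.1 i + lam.1 i) % 2, fun i => (κ.2 i + lam.2 i) % 2)

/-- For each even characteristic `δ_d`, the ordering `(k₁,…,k₆)` of `{1,…,6}` (0-indexed) whose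
first three entries form the triad of odd characteristics with `δ_d = ν_{k₁}+ν_{k₂}+ν_{k₃}`
and whose last three are the complementary indices. -/
def triad : Fin 10 → Fin 6 → Fin 6 :=
  ![![0,3,5,1,2,4], ![0,1,5,2,3,4], ![0,1,4,2,3,5], ![0,3,4,1,2,5], ![0,1,3,2,4,5],
    ![0,4,5,1,2,3], ![0,1,2,3,4,5], ![0,2,3,1,4,5], ![0,2,5,1,3,4], ![0,2,4,1,3,5]]

/-- D'Hoker–Phong's `Ξ₆[δ]`. -/
noncomputable def Xi6 (d : Fin 10) (τ : Mat2) : ℂ :=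
  ∑ i : Fin 3, ∑ j : Fin 3,
    if i < j then
      sig (νodd (triad d (Fin.castLE (by norm_num) i))) (νodd (triad d (Fin.castLE (by norm_num) j))) *
        ∏ m : Fin 3,
          theta (addChar (addChar (νodd (triad d (Fin.castLE (by norm_num) i)))
              (νodd (triad d (Fin.castLE (by norm_num) j))))
            (νodd (triad d (⟨m.1 + 3, by omega⟩ : Fin 6)))) τ ^ 4
    else 0

/-- The formal derivative `∂I₄/∂θ⁴[δ]` of the Igusa quartic with respect to the ten fourth
powers of the even theta constants, regarded as independent variables. -/
noncomputable def Dd (d : Fin 10) (τ : Mat2) : ℂ :=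
  (1 / 48 : ℂ) *
    (theta (δev d) τ ^ 4 * (∑ d' : Fin 10, theta (δev d') τ ^ 8) - 4 * theta (δev d) τ ^ 12)

/-- `f_δ = 2Ξ₆[δ] − ∂I₄/∂θ⁴[δ]`. -/
noncomputable def fδ (d : Fin 10) (τ : Mat2) : ℂ := 2 * Xi6 d τ - Dd d τ

/-- `Ψ₆`, the weight-6 modular form. -/
noncomputable def Ψ6 (τ : Mat2) : ℂ :=
  P0 τ ^ 3 - 9 * P0 τ * (P1 τ ^ 2 + P2 τ ^ 2 + P3 τ ^ 2 - 4 * P4 τ ^ 2)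
    + 54 * (P1 τ * P2 τ * P3 τ)

/-- `Ψ₁₀`, the weight-10 modular form. -/
noncomputable def Ψ10 (τ : Mat2) : ℂ := ∏ d : Fin 10, theta (δev d) τ ^ 2

/-- A characteristic is even when `a·b` is even. -/
def IsEvenChar (κ : Char) : Prop := (∑ i, κ.1 i * κ.2 i) % 2 = 0

/-- A characteristic is odd when `a·b` is odd. -/
def IsOddChar (κ : Char) : Prop := (∑ i, κ.1 i * κ.2 i) % 2 = 1


open scoped Matrix

/-!
Riemann's addition formula writes `θ[a;b](τ)²` as a signed sum of products of the second-order theta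
constants `Θ[ε](τ) = θ[ε;0](2τ)`. Squaring once more, the ten functions `θ⁴[δ]` are the images of
`P₀, …, P₄` under a `10 × 5` matrix whose columns are orthogonal and nonzero, so it remains to see
that the `P_k` are linearly independent. An integral translation `τ ↦ τ + S` multiplies `Θ[ε]` by
the power of `i` with exponent `εᵀSε`; hence the `P_k` are eigenvectors of all these translations,
for five different sign characters, and they do not vanish because every `Θ[ε]` is positive at
`τ = i·1`.
-/

/-! ### Positive definite Gaussian sums over `ℤ^g` -/

section Gaussian

variable {ι : Type*} [Fintype ι]

lemma summable_prod_pi {κ : ι → Type*} {f : ∀ i, κ i → ℝ} (hf_nonneg : ∀ i k, 0 ≤ f i k)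
    (hf : ∀ i, Summable (f i)) : Summable fun k : ∀ i, κ i => ∏ i, f i (k i) := by
  classical
  refine summable_of_sum_le (c := ∏ i, ∑' k, f i k)
    (fun k => Finset.prod_nonneg fun i _ => hf_nonneg i (k i)) fun s => ?_
  calc ∑ k ∈ s, ∏ i, f i (k i)
      ≤ ∑ k ∈ Fintype.piFinset fun i => s.image (· i), ∏ i, f i (k i) :=
        Finset.sum_le_sum_of_subset_of_nonneg
          (fun k hk => Fintype.mem_piFinset.2 fun i => Finset.mem_image_of_mem _ hk)
          (fun k _ _ => Finset.prod_nonneg fun i _ => hf_nonneg i (k i))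
    _ = ∏ i, ∑ k ∈ s.image (· i), f i k := (Finset.prod_univ_sum _ _).symm
    _ ≤ ∏ i, ∑' k, f i k :=
        Finset.prod_le_prod (fun i _ => Finset.sum_nonneg fun k _ => hf_nonneg i k)
          (fun i _ => (hf i).sum_le_tsum _ fun k _ => hf_nonneg i k)

lemma exists_pos_mul_dotProduct_self_le {Y : Matrix ι ι ℝ} (hY : Y.PosDef) :
    ∃ c > 0, ∀ x : ι → ℝ, c * (x ⬝ᵥ x) ≤ x ⬝ᵥ Y *ᵥ x := by
  have rayleigh_pos (x : ι → ℝ) (hx : x ≠ 0) : 0 < (x ⬝ᵥ Y *ᵥ x) / (x ⬝ᵥ x) :=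
    div_pos (hY.dotProduct_mulVec_pos hx) (Matrix.dotProduct_star_self_pos_iff.2 hx)
  have ne_zero_of_mem_sphere {x : ι → ℝ} (hx : x ∈ Metric.sphere 0 1) : x ≠ 0 :=
    ne_zero_of_mem_unit_sphere ⟨x, hx⟩
  obtain ⟨c, hc, hc_le⟩ := (isCompact_sphere (0 : ι → ℝ) 1).exists_forall_le'
    (f := fun x => (x ⬝ᵥ Y *ᵥ x) / (x ⬝ᵥ x))
    (ContinuousOn.div (by fun_prop) (by fun_prop)
      fun x hx => dotProduct_self_eq_zero.not.2 (ne_zero_of_mem_sphere hx))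
    fun x hx => rayleigh_pos x (ne_zero_of_mem_sphere hx)
  refine ⟨c, hc, fun x => ?_⟩
  obtain rfl | hx := eq_or_ne x 0
  · simp
  have key := hc_le (‖x‖⁻¹ • x) (by simp [norm_smul, hx])
  rw [Matrix.mulVec_smul] at key
  simp only [smul_dotProduct, dotProduct_smul, smul_eq_mul] at key
  rw [mul_div_mul_left _ _ (by simpa using hx), mul_div_mul_left _ _ (by simpa using hx)] at key
  exact (le_div_iff₀ (Matrix.dotProduct_star_self_pos_iff.2 hx)).1 key

lemma summable_exp_neg_pi_mul_sq {c : ℝ} (hc : 0 < c) (s : ℝ) :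
    Summable fun n : ℤ => Real.exp (-Real.pi * (c * (n + s) ^ 2)) := by
  have h := ((summable_jacobiTheta₂_term_iff (Complex.I * (c * s : ℝ)) (Complex.I * c)).2
    (by simpa using hc)).norm
  refine (h.mul_left (Real.exp (-Real.pi * (c * s ^ 2)))).congr fun n => ?_
  rw [norm_jacobiTheta₂_term, ← Real.exp_add]
  congr 1
  simp only [neg_mul, Complex.mul_im, Complex.I_re, Complex.I_im, Complex.ofReal_im,
    Complex.ofReal_re, mul_zero, one_mul, zero_add]
  ring

lemma summable_exp_neg_pi_mul_posDef {Y : Matrix ι ι ℝ} (hY : Y.PosDef) (s : ι → ℝ) :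
    Summable fun n : ι → ℤ =>
      Real.exp (-Real.pi * ((fun i => n i + s i) ⬝ᵥ Y *ᵥ fun i => n i + s i)) := by
  obtain ⟨c, hc, hc_le⟩ := exists_pos_mul_dotProduct_self_le hY
  refine Summable.of_nonneg_of_le (fun n => (Real.exp_pos _).le) (fun n => ?_)
    (summable_prod_pi (fun _ _ => (Real.exp_pos _).le)
      fun i => summable_exp_neg_pi_mul_sq hc (s i))
  rw [← Real.exp_sum, ← Finset.mul_sum, ← Finset.mul_sum, Real.exp_le_exp]
  refine mul_le_mul_of_nonpos_left ?_ (neg_nonpos.2 Real.pi_pos.le)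
  simpa only [dotProduct, ← sq] using hc_le fun i => n i + s i

end Gaussian

/-! ### Theta constants of arbitrary genus -/

section ThetaSeries

lemma posDef_im_two_smul {ι : Type*} {τ : Matrix ι ι ℂ} (hτ : (τ.map Complex.im).PosDef) :
    (((2 : ℂ) • τ).map Complex.im).PosDef := by
  have him : ((2 : ℂ) • τ).map Complex.im = (2 : ℝ) • τ.map Complex.im := by ext; simp
  exact him ▸ hτ.smul two_pos

variable {ι : Type*} [Fintype ι]

/-- The shifted lattice point `n + a/2` at which a theta series with upper characteristic `a` is
summed. -/
noncomputable def shiftedPoint (a n : ι → ℤ) : ι → ℝ := fun i => n i + a i / 2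

/-- The exponential `exp(πi(xᵀτx + xᵀb))`, the summand of a theta series at the point `x`. -/
noncomputable def thetaExp (τ : Matrix ι ι ℂ) (b : ι → ℤ) (x : ι → ℝ) : ℂ :=
  Complex.exp (Real.pi * Complex.I *
    ((fun i => (x i : ℂ)) ⬝ᵥ τ *ᵥ (fun i => (x i : ℂ)) + ∑ i, (x i : ℂ) * b i))

/-- The theta constant `θ[a;b](τ)` of genus `g = #ι`, which for `ι = Fin 2` is `theta (a, b)`. -/
noncomputable def thetaSeries (a b : ι → ℤ) (τ : Matrix ι ι ℂ) : ℂ :=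
  ∑' n : ι → ℤ, thetaExp τ b (shiftedPoint a n)

/-- The second-order theta constant `θ[a;0](2τ)`, which for `ι = Fin 2` is `Θf a`. -/
noncomputable def secondOrderTheta (a : ι → ℤ) (τ : Matrix ι ι ℂ) : ℂ :=
  thetaSeries a 0 ((2 : ℂ) • τ)

lemma norm_thetaExp (τ : Matrix ι ι ℂ) (b : ι → ℤ) (x : ι → ℝ) :
    ‖thetaExp τ b x‖ = Real.exp (-Real.pi * (x ⬝ᵥ τ.map Complex.im *ᵥ x)) := by
  have hre (z : ℂ) : (Real.pi * Complex.I * z).re = -Real.pi * z.im := by simp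
  rw [thetaExp, Complex.norm_exp, hre]
  simp [dotProduct, Matrix.mulVec]

lemma summable_norm_thetaExp {τ : Matrix ι ι ℂ} (hτ : (τ.map Complex.im).PosDef)
    (a b : ι → ℤ) : Summable fun n => ‖thetaExp τ b (shiftedPoint a n)‖ := by
  simp only [norm_thetaExp]
  exact summable_exp_neg_pi_mul_posDef hτ fun i => a i / 2

lemma dotProduct_mulVec_parallelogram {R : Type*} [CommRing R] (M : Matrix ι ι R) (u v : ι → R) :
    (u + v) ⬝ᵥ M *ᵥ (u + v) + (u - v) ⬝ᵥ M *ᵥ (u - v) =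
      2 * (u ⬝ᵥ M *ᵥ u) + 2 * (v ⬝ᵥ M *ᵥ v) := by
  simp only [Matrix.mulVec_add, Matrix.mulVec_sub, add_dotProduct, sub_dotProduct,
    dotProduct_add, dotProduct_sub]
  ring

lemma thetaExp_add_mul_thetaExp_sub (τ : Matrix ι ι ℂ) (b : ι → ℤ) (u v : ι → ℝ) :
    thetaExp τ b (u + v) * thetaExp τ b (u - v) =
      Complex.exp (Real.pi * Complex.I * (2 * ∑ i, (u i : ℂ) * b i)) *
        (thetaExp ((2 : ℂ) • τ) 0 u * thetaExp ((2 : ℂ) • τ) 0 v) := by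
  have hquad := dotProduct_mulVec_parallelogram τ (fun i => (u i : ℂ)) (fun i => (v i : ℂ))
  simp only [thetaExp, ← Complex.exp_add]
  congr 1
  have hadd : (fun i => ((u + v) i : ℂ)) = (fun i => (u i : ℂ)) + fun i => (v i : ℂ) := by
    ext i; simp
  have hsub : (fun i => ((u - v) i : ℂ)) = (fun i => (u i : ℂ)) - fun i => (v i : ℂ) := by
    ext i; simp
  have hlin : ∑ i, ((u + v) i : ℂ) * b i + ∑ i, ((u - v) i : ℂ) * b i =
      2 * ∑ i, (u i : ℂ) * b i := by
    simp only [← Finset.sum_add_distrib, Finset.mul_sum, Pi.add_apply, Pi.sub_apply,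
      Complex.ofReal_add, Complex.ofReal_sub]
    exact Finset.sum_congr rfl fun i _ => by ring
  simp only [hadd, hsub, Matrix.smul_mulVec, dotProduct_smul, smul_eq_mul, Pi.zero_apply,
    Int.cast_zero, mul_zero, Finset.sum_const_zero]
  linear_combination (Real.pi * Complex.I : ℂ) * (hquad + hlin)

/-- The integer vector with entries in `{0, 1}` given by a vector of bits. -/
def bits (e : ι → Fin 2) : ι → ℤ := fun i => (e i : ℕ)

lemma exp_pi_mul_I_mul_intCast (k : ℤ) :
    Complex.exp (Real.pi * Complex.I * k) = (-1) ^ k := by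
  rw [mul_comm, Complex.exp_int_mul, Complex.exp_pi_mul_I]

lemma thetaExp_mul_thetaExp (τ : Matrix ι ι ℂ) (a b e p q : ι → ℤ) :
    thetaExp τ b (shiftedPoint a (p + q + e)) * thetaExp τ b (shiftedPoint a (p - q - a)) =
      (-1) ^ (e ⬝ᵥ b) * (thetaExp ((2 : ℂ) • τ) 0 (shiftedPoint e p) *
        thetaExp ((2 : ℂ) • τ) 0 (shiftedPoint (e + a) q)) := by
  have hadd : shiftedPoint a (p + q + e) = shiftedPoint e p + shiftedPoint (e + a) q := by
    ext i
    simp only [shiftedPoint, Pi.add_apply, Int.cast_add]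
    ring
  have hsub : shiftedPoint a (p - q - a) = shiftedPoint e p - shiftedPoint (e + a) q := by
    ext i
    simp only [shiftedPoint, Pi.add_apply, Pi.sub_apply, Int.cast_add, Int.cast_sub]
    ring
  have hlin : 2 * ∑ i, (shiftedPoint e p i : ℂ) * b i = ((2 * (p ⬝ᵥ b) + e ⬝ᵥ b : ℤ) : ℂ) := by
    simp only [shiftedPoint, dotProduct, Finset.mul_sum, ← Finset.sum_add_distrib]
    push_cast
    exact Finset.sum_congr rfl fun i _ => by ring
  rw [hadd, hsub, thetaExp_add_mul_thetaExp_sub, hlin, exp_pi_mul_I_mul_intCast,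
    zpow_add₀ (by norm_num), zpow_mul, zpow_ofNat, neg_one_sq, one_zpow, one_mul]

/-- The change of summation variables `(e, p, q) ↦ (p + q + e, p - q - a)` of the addition formula;
the bits `e` record the parity of the sum of the two new variables shifted by `a`. -/
def additionEquiv (a : ι → ℤ) :
    (ι → Fin 2) × (ι → ℤ) × (ι → ℤ) ≃ (ι → ℤ) × (ι → ℤ) where
  toFun x := (x.2.1 + x.2.2 + bits x.1, x.2.1 - x.2.2 - a)
  invFun y := (fun i => ⟨((y.1 i + y.2 i + a i) % 2).toNat, by omega⟩,
    fun i => (y.1 i + y.2 i + a i) / 2, fun i => (y.1 i + y.2 i + a i) / 2 - a i - y.2 i)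
  left_inv := by
    rintro ⟨e, p, q⟩
    have he (i : ι) := (e i).2
    simp only [Prod.mk.injEq, funext_iff, Fin.ext_iff, Pi.add_apply, Pi.sub_apply, bits]
    refine ⟨fun i => ?_, fun i => ?_, fun i => ?_⟩ <;> have := he i <;> omega
  right_inv := by
    rintro ⟨n, m⟩
    simp only [Prod.mk.injEq, funext_iff, Pi.add_apply, Pi.sub_apply, bits]
    constructor <;> intro i <;> omega

theorem thetaSeries_sq [DecidableEq ι] {τ : Matrix ι ι ℂ} (hτ : (τ.map Complex.im).PosDef)
    (a b : ι → ℤ) :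
    thetaSeries a b τ ^ 2 =
      ∑ e, (-1) ^ (bits e ⬝ᵥ b) *
        (secondOrderTheta (bits e) τ * secondOrderTheta (bits e + a) τ) := by
  have h := summable_norm_thetaExp hτ a b
  have h₂ (c : ι → ℤ) := summable_norm_thetaExp (posDef_im_two_smul hτ) c 0
  have hprod := (additionEquiv a).summable_iff.2 (summable_mul_of_summable_norm h h)
  calc thetaSeries a b τ ^ 2
      = ∑' x, thetaExp τ b (shiftedPoint a (additionEquiv a x).1) *
          thetaExp τ b (shiftedPoint a (additionEquiv a x).2) := by
        rw [sq, thetaSeries, tsum_mul_tsum_of_summable_norm h h, ← (additionEquiv a).tsum_eq]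
    _ = ∑ e, ∑' y : (ι → ℤ) × (ι → ℤ),
          thetaExp τ b (shiftedPoint a (y.1 + y.2 + bits e)) *
            thetaExp τ b (shiftedPoint a (y.1 - y.2 - a)) := by
        rw [← tsum_fintype (L := .unconditional _)]
        exact hprod.tsum_prod
    _ = ∑ e, (-1) ^ (bits e ⬝ᵥ b) *
          (secondOrderTheta (bits e) τ * secondOrderTheta (bits e + a) τ) := by
        simp only [thetaExp_mul_thetaExp, tsum_mul_left, secondOrderTheta, thetaSeries,
          tsum_mul_tsum_of_summable_norm (h₂ _) (h₂ _)]

lemma thetaSeries_add_two_mul (a k b : ι → ℤ) (τ : Matrix ι ι ℂ) :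
    thetaSeries (a + 2 * k) b τ = thetaSeries a b τ := by
  have hpoint (n : ι → ℤ) : shiftedPoint (a + 2 * k) n = shiftedPoint a (n + k) := by
    ext i
    simp only [shiftedPoint, Pi.add_apply, Pi.mul_apply, Pi.ofNat_apply, Int.cast_add,
      Int.cast_mul, Int.cast_ofNat]
    ring
  simp only [thetaSeries, hpoint]
  exact (Equiv.addRight k).tsum_eq fun n => thetaExp τ b (shiftedPoint a n)

lemma secondOrderTheta_add_two_mul (a k : ι → ℤ) (τ : Matrix ι ι ℂ) :
    secondOrderTheta (a + 2 * k) τ = secondOrderTheta a τ :=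
  thetaSeries_add_two_mul a k 0 _

lemma map_dotProduct_mulVec {R S : Type*} [NonAssocSemiring R] [NonAssocSemiring S] (f : R →+* S)
    (M : Matrix ι ι R) (u v : ι → R) :
    f (u ⬝ᵥ M *ᵥ v) = (f ∘ u) ⬝ᵥ M.map f *ᵥ (f ∘ v) := by
  rw [f.map_dotProduct, ← funext (f.map_mulVec M v)]
  rfl

lemma shiftedPoint_dotProduct_mulVec {S : Matrix ι ι ℤ} (hS : S.IsSymm) (a n : ι → ℤ) :
    (fun i => (shiftedPoint a n i : ℂ)) ⬝ᵥ S.map (↑) *ᵥ (fun i => (shiftedPoint a n i : ℂ)) =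
      ((n ⬝ᵥ S *ᵥ n + n ⬝ᵥ S *ᵥ a : ℤ) : ℂ) + ((a ⬝ᵥ S *ᵥ a : ℤ) : ℂ) / 4 := by
  have hswap : a ⬝ᵥ S *ᵥ n = n ⬝ᵥ S *ᵥ a := by
    rw [Matrix.dotProduct_mulVec, ← Matrix.mulVec_transpose, hS.eq, dotProduct_comm]
  have hpoint : (fun i => (shiftedPoint a n i : ℂ)) =
      (fun i => (n i : ℂ)) + (1 / 2 : ℂ) • fun i => (a i : ℂ) := by
    ext i
    simp only [shiftedPoint, Complex.ofReal_add, Complex.ofReal_intCast, Complex.ofReal_div,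
      Complex.ofReal_ofNat, Pi.add_apply, Pi.smul_apply, smul_eq_mul]
    ring
  have hcast (u v : ι → ℤ) : ((u ⬝ᵥ S *ᵥ v : ℤ) : ℂ) =
      (fun i => (u i : ℂ)) ⬝ᵥ S.map (↑) *ᵥ fun i => (v i : ℂ) :=
    map_dotProduct_mulVec (Int.castRingHom ℂ) S u v
  have hswap_cast := congrArg (Int.cast : ℤ → ℂ) hswap
  simp only [hcast, Int.cast_add] at hswap_cast ⊢
  simp only [hpoint, Matrix.mulVec_add, Matrix.mulVec_smul, add_dotProduct, dotProduct_add,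
    smul_dotProduct, dotProduct_smul, smul_eq_mul]
  linear_combination (1 / 2 : ℂ) * hswap_cast

lemma thetaExp_add_two_smul {S : Matrix ι ι ℤ} (hS : S.IsSymm) (τ : Matrix ι ι ℂ)
    (a b n : ι → ℤ) :
    thetaExp (τ + (2 : ℂ) • S.map (↑)) b (shiftedPoint a n) =
      Complex.I ^ (a ⬝ᵥ S *ᵥ a) * thetaExp τ b (shiftedPoint a n) := by
  rw [← Complex.exp_pi_div_two_mul_I, ← Complex.exp_int_mul, thetaExp, thetaExp,
    ← Complex.exp_add, Complex.exp_eq_exp_iff_exists_int]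
  refine ⟨n ⬝ᵥ S *ᵥ n + n ⬝ᵥ S *ᵥ a, ?_⟩
  rw [Matrix.add_mulVec, dotProduct_add, Matrix.smul_mulVec, dotProduct_smul, smul_eq_mul,
    shiftedPoint_dotProduct_mulVec hS]
  ring

theorem secondOrderTheta_add {S : Matrix ι ι ℤ} (hS : S.IsSymm) (a : ι → ℤ)
    (τ : Matrix ι ι ℂ) :
    secondOrderTheta a (τ + S.map (↑)) =
      Complex.I ^ (a ⬝ᵥ S *ᵥ a) * secondOrderTheta a τ := by
  simp only [secondOrderTheta, thetaSeries, smul_add, thetaExp_add_two_smul hS, tsum_mul_left]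

open scoped ComplexOrder in
lemma thetaExp_I_smul_pos (Y : Matrix ι ι ℝ) (x : ι → ℝ) :
    0 < thetaExp (Complex.I • Y.map (↑)) 0 x := by
  have hcast : ((x ⬝ᵥ Y *ᵥ x : ℝ) : ℂ) =
      (fun i => (x i : ℂ)) ⬝ᵥ Y.map (↑) *ᵥ fun i => (x i : ℂ) :=
    map_dotProduct_mulVec Complex.ofRealHom Y x x
  have hexp : thetaExp (Complex.I • Y.map (↑)) 0 x =
      (Real.exp (-Real.pi * (x ⬝ᵥ Y *ᵥ x)) : ℝ) := by
    rw [thetaExp, Matrix.smul_mulVec, dotProduct_smul, ← hcast, Complex.ofReal_exp]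
    congr 1
    simp only [smul_eq_mul, Pi.zero_apply, Int.cast_zero, mul_zero, Finset.sum_const_zero,
      Complex.ofReal_mul, Complex.ofReal_neg]
    linear_combination (Real.pi * (x ⬝ᵥ Y *ᵥ x : ℝ) : ℂ) * Complex.I_sq
  rw [hexp]
  exact_mod_cast Real.exp_pos _

lemma map_im_I_smul {ι : Type*} (Y : Matrix ι ι ℝ) :
    (Complex.I • Y.map ((↑) : ℝ → ℂ)).map Complex.im = Y := by
  ext; simp

open scoped ComplexOrder in
theorem thetaSeries_I_smul_pos {Y : Matrix ι ι ℝ} (hY : Y.PosDef) (a : ι → ℤ) :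
    0 < thetaSeries a 0 (Complex.I • Y.map (↑)) :=
  (summable_norm_thetaExp (by rwa [map_im_I_smul]) a 0).of_norm.tsum_pos
    (fun n => (thetaExp_I_smul_pos Y _).le) 0 (thetaExp_I_smul_pos Y _)

open scoped ComplexOrder in
theorem secondOrderTheta_I_smul_pos {Y : Matrix ι ι ℝ} (hY : Y.PosDef) (a : ι → ℤ) :
    0 < secondOrderTheta a (Complex.I • Y.map (↑)) := by
  have hsmul : (2 : ℂ) • Complex.I • Y.map ((↑) : ℝ → ℂ) =
      Complex.I • ((2 : ℝ) • Y).map (↑) := by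
    ext i j
    simp only [Matrix.smul_apply, Matrix.map_apply, smul_eq_mul, Complex.ofReal_mul,
      Complex.ofReal_ofNat]
    ring
  rw [secondOrderTheta, hsmul]
  exact thetaSeries_I_smul_pos (hY.smul two_pos) a

end ThetaSeries

/-! ### Linear algebra -/

section LinearAlgebra

lemma linearIndependent_of_joint_eigenvectors {R M ι κ : Type*} [CommRing R] [IsDomain R]
    [AddCommGroup M] [Module R M] [Module.IsTorsionFree R M] {T : κ → Module.End R M}
    (hT : ∀ k l, Commute (T k) (T l)) {χ : ι → κ → R} (hχ : Function.Injective χ) {v : ι → M}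
    (hv : ∀ i k, T k (v i) = χ i k • v i) (hv_ne : ∀ i, v i ≠ 0) : LinearIndependent R v := by
  have hindep := Module.End.independent_iInf_maxGenEigenspace_of_forall_mapsTo T
    fun k l φ => Module.End.mapsTo_genEigenspace_of_comm (hT l k) φ ⊤
  refine (hindep.comp hχ).linearIndependent _ (fun i => (Submodule.mem_iInf _).2 fun k => ?_) hv_ne
  exact (T k).genEigenspace_le_maximal _ 1 (Module.End.mem_eigenspace_iff.2 (hv i k))

lemma finrank_span_range_sum_smul {K M m n : Type*} [Field K] [AddCommGroup M] [Module K M]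
    [Finite m] [Fintype n] (A : Matrix m n K) {v : n → M} (hv : LinearIndependent K v) :
    Module.finrank K (Submodule.span K (Set.range fun i => ∑ j, A i j • v j)) = A.rank := by
  have hinj : Function.Injective (Fintype.linearCombination K v) :=
    hv.fintypeLinearCombination_injective
  have hrange : (Set.range fun i => ∑ j, A i j • v j) =
      Fintype.linearCombination K v '' Set.range A.row := by
    rw [← Set.range_comp]
    rfl
  rw [hrange, Submodule.span_image, A.rank_eq_finrank_span_row]
  exact (Submodule.equivMapOfInjective _ hinj _).finrank_eq.symm

end LinearAlgebra

/-! ### Genus two -/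

lemma theta_eq_thetaSeries (κ : Char) (τ : Mat2) : theta κ τ = thetaSeries κ.1 κ.2 τ := by
  simp only [theta, thetaSeries, thetaExp, shiftedPoint, dotProduct, Matrix.mulVec,
    Finset.mul_sum, mul_assoc, Complex.ofReal_add, Complex.ofReal_div, Complex.ofReal_intCast,
    Complex.ofReal_ofNat]

lemma Θf_eq_secondOrderTheta (ε : Fin 2 → ℤ) (τ : Mat2) : Θf ε τ = secondOrderTheta ε τ := by
  have hzero : (![0, 0] : Fin 2 → ℤ) = 0 := by simp
  rw [Θf, theta_eq_thetaSeries, hzero, secondOrderTheta]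

section

variable (x : ℤ) (τ : Mat2)

lemma Θf_two_left : Θf ![2, x] τ = Θf ![0, x] τ := by
  have hshift : (![2, x] : Fin 2 → ℤ) = ![0, x] + 2 * ![1, 0] := by
    ext i; fin_cases i <;> simp
  rw [Θf_eq_secondOrderTheta, hshift, secondOrderTheta_add_two_mul, Θf_eq_secondOrderTheta]

lemma Θf_two_right : Θf ![x, 2] τ = Θf ![x, 0] τ := by
  have hshift : (![x, 2] : Fin 2 → ℤ) = ![x, 0] + 2 * ![0, 1] := by
    ext i; fin_cases i <;> simp
  rw [Θf_eq_secondOrderTheta, hshift, secondOrderTheta_add_two_mul, Θf_eq_secondOrderTheta]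

end

lemma theta_sq_eq {τ : Mat2} (hτ : τ ∈ SiegelH2) (a b c d : ℤ) :
    theta (![a, b], ![c, d]) τ ^ 2 =
      Θf ![0, 0] τ * Θf ![a, b] τ + (-1) ^ d * (Θf ![0, 1] τ * Θf ![a, 1 + b] τ) +
        (-1) ^ c * (Θf ![1, 0] τ * Θf ![1 + a, b] τ) +
        (-1) ^ (c + d) * (Θf ![1, 1] τ * Θf ![1 + a, 1 + b] τ) := by
  have hbits (i j : Fin 2) : bits ![i, j] = ![((i : ℕ) : ℤ), ((j : ℕ) : ℤ)] := by
    ext k; fin_cases k <;> rfl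
  rw [theta_eq_thetaSeries, thetaSeries_sq hτ.2, ← (finTwoArrowEquiv (Fin 2)).symm.sum_comp]
  simp [Fintype.sum_prod_type, hbits, Θf_eq_secondOrderTheta, add_assoc]

/-- The coefficients of the fourth powers `θ⁴[δ]`, one row for each even characteristic, in terms of
`P₀, …, P₄`. -/
def thetaFourMatrix : Matrix (Fin 10) (Fin 5) ℂ :=
  !![1,  1,  1,  1,  0;
     1, -1,  1, -1,  0;
     1,  1, -1, -1,  0;
     1, -1, -1,  1,  0;
     0,  2,  0,  0,  2;
     0,  2,  0,  0, -2;
     0,  0,  2,  0,  2;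
     0,  0,  2,  0, -2;
     0,  0,  0,  2,  2;
     0,  0,  0,  2, -2]

lemma theta_pow_four {τ : Mat2} (hτ : τ ∈ SiegelH2) (d : Fin 10) :
    theta (δev d) τ ^ 4 = ∑ k, thetaFourMatrix d k * Pv k τ := by
  rw [show theta (δev d) τ ^ 4 = (theta (δev d) τ ^ 2) ^ 2 by ring, Fin.sum_univ_five]
  fin_cases d <;>
    simp [δev, theta_sq_eq hτ, Θf_two_left, Θf_two_right, thetaFourMatrix, Pv, P0, P1, P2, P3, P4,
      one_add_one_eq_two] <;>
    ring

lemma rank_thetaFourMatrix : thetaFourMatrix.rank = 5 := by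
  have hgram : thetaFourMatrix.transpose * thetaFourMatrix =
      Matrix.diagonal ![4, 12, 12, 12, 24] := by
    ext i j
    fin_cases i <;> fin_cases j <;>
      norm_num [thetaFourMatrix, Matrix.mul_apply, Fin.sum_univ_succ]
  have hunit : IsUnit (thetaFourMatrix.transpose * thetaFourMatrix) := by
    simp [hgram, Matrix.isUnit_iff_isUnit_det, Fin.prod_univ_succ]
  refine le_antisymm thetaFourMatrix.rank_le_width ?_
  simpa [Matrix.rank_of_isUnit _ hunit] using
    Matrix.rank_mul_le_right thetaFourMatrix.transpose thetaFourMatrix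

/-- The exponents of the sign characters by which integral translations `τ ↦ τ + S` act on
`P₀, …, P₄`. -/
def signExponent (S : Matrix (Fin 2) (Fin 2) ℤ) : Fin 5 → ℤ :=
  ![0, S 1 1, S 0 0, S 0 0 + S 1 1, S 0 0 + S 0 1 + S 1 1]

lemma I_zpow_sq (n : ℤ) : (Complex.I ^ n) ^ 2 = (-1) ^ n := by
  rw [← Complex.I_sq, ← zpow_natCast, ← zpow_natCast, zpow_comm]

lemma Θf_one_one_add {S : Matrix (Fin 2) (Fin 2) ℤ} (hS : S.IsSymm) (τ : Mat2) :
    Θf ![1, 1] (τ + S.map (↑)) =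
      Complex.I ^ S 0 0 * (-1) ^ S 0 1 * Complex.I ^ S 1 1 * Θf ![1, 1] τ := by
  have hquad : ![1, 1] ⬝ᵥ S *ᵥ ![1, 1] = S 0 0 + S 0 1 + S 0 1 + S 1 1 := by
    simp [hS.apply 0 1, ← add_assoc]
  rw [Θf_eq_secondOrderTheta, Θf_eq_secondOrderTheta, secondOrderTheta_add hS, hquad,
    zpow_add₀ Complex.I_ne_zero, zpow_add₀ Complex.I_ne_zero, zpow_add₀ Complex.I_ne_zero,
    ← I_zpow_sq]
  ring

lemma Pv_add {S : Matrix (Fin 2) (Fin 2) ℤ} (hS : S.IsSymm) (τ : Mat2) (k : Fin 5) :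
    Pv k (τ + S.map (↑)) = (-1) ^ signExponent S k * Pv k τ := by
  have hsign_sq (n : ℤ) : ((-1 : ℂ) ^ n) ^ 2 = 1 := by
    rw [← zpow_natCast, zpow_comm, zpow_natCast, neg_one_sq, one_zpow]
  have h00 : Θf ![0, 0] (τ + S.map (↑)) = Θf ![0, 0] τ := by
    simp [Θf_eq_secondOrderTheta, secondOrderTheta_add hS]
  have h01 : Θf ![0, 1] (τ + S.map (↑)) = Complex.I ^ S 1 1 * Θf ![0, 1] τ := by
    simp [Θf_eq_secondOrderTheta, secondOrderTheta_add hS]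
  have h10 : Θf ![1, 0] (τ + S.map (↑)) = Complex.I ^ S 0 0 * Θf ![1, 0] τ := by
    simp [Θf_eq_secondOrderTheta, secondOrderTheta_add hS]
  have hneg : (-1 : ℂ) ≠ 0 := by norm_num
  fin_cases k
  · change P0 _ = (-1) ^ (0 : ℤ) * P0 τ
    have pow_four (z : ℂ) : z ^ 4 = (z ^ 2) ^ 2 := by ring
    simp only [P0, h00, h01, h10, Θf_one_one_add hS, pow_four, mul_pow, I_zpow_sq, hsign_sq,
      zpow_zero, one_pow, one_mul]
  · change P1 _ = (-1) ^ S 1 1 * P1 τ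
    simp only [P1, h00, h01, h10, Θf_one_one_add hS, mul_pow, I_zpow_sq, hsign_sq]
    linear_combination
      2 * (-1) ^ S 1 1 * Θf ![1, 0] τ ^ 2 * Θf ![1, 1] τ ^ 2 * hsign_sq (S 0 0)
  · change P2 _ = (-1) ^ S 0 0 * P2 τ
    simp only [P2, h00, h01, h10, Θf_one_one_add hS, mul_pow, I_zpow_sq, hsign_sq]
    linear_combination
      2 * (-1) ^ S 0 0 * Θf ![0, 1] τ ^ 2 * Θf ![1, 1] τ ^ 2 * hsign_sq (S 1 1)
  · change P3 _ = (-1) ^ (S 0 0 + S 1 1) * P3 τ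
    simp only [P3, h00, h01, h10, Θf_one_one_add hS, mul_pow, I_zpow_sq, hsign_sq, zpow_add₀ hneg]
    ring
  · change P4 _ = (-1) ^ (S 0 0 + S 0 1 + S 1 1) * P4 τ
    simp only [P4, h00, h01, h10, Θf_one_one_add hS, zpow_add₀ hneg, ← I_zpow_sq (S 0 0),
      ← I_zpow_sq (S 1 1)]
    ring

lemma neg_one_zpow_signExponent_injective : Function.Injective
    fun k (S : {S : Matrix (Fin 2) (Fin 2) ℤ // S.IsSymm}) => (-1 : ℂ) ^ signExponent S.1 k := by
  intro k l h
  have hparity (S : {S : Matrix (Fin 2) (Fin 2) ℤ // S.IsSymm}) :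
      Even (signExponent S.1 k) ↔ Even (signExponent S.1 l) := by
    have even_iff (n : ℤ) : Even n ↔ (-1 : ℂ) ^ n = 1 := by
      grind [neg_one_zpow_eq_ite]
    rw [even_iff, even_iff]
    exact Eq.congr_left (congrFun h S)
  have h₀₀ := hparity ⟨!![1, 0; 0, 0], by decide⟩
  have h₁₁ := hparity ⟨!![0, 0; 0, 1], by decide⟩
  have h₀₁ := hparity ⟨!![0, 1; 1, 0], by decide⟩
  clear h hparity
  revert k l
  decide

lemma add_intCast_mem_SiegelH2 {τ : Mat2} (hτ : τ ∈ SiegelH2) {S : Matrix (Fin 2) (Fin 2) ℤ}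
    (hS : S.IsSymm) : τ + S.map (↑) ∈ SiegelH2 := by
  refine ⟨?_, ?_⟩
  · rw [Matrix.transpose_add, hτ.1, ← Matrix.transpose_map, hS.eq]
  · have him : (τ + S.map ((↑) : ℤ → ℂ)).map Complex.im = τ.map Complex.im := by ext; simp
    exact him ▸ hτ.2

/-- The translation `τ ↦ τ + S` of the Siegel upper half space by an integral symmetric matrix. -/
def siegelTranslate (S : {S : Matrix (Fin 2) (Fin 2) ℤ // S.IsSymm}) (τ : SiegelH2) : SiegelH2 :=
  ⟨τ.1 + S.1.map (↑), add_intCast_mem_SiegelH2 τ.2 S.2⟩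

lemma siegelTranslate_comm (S T : {S : Matrix (Fin 2) (Fin 2) ℤ // S.IsSymm}) (τ : SiegelH2) :
    siegelTranslate S (siegelTranslate T τ) = siegelTranslate T (siegelTranslate S τ) :=
  Subtype.ext (add_right_comm _ _ _)

lemma I_smul_mem_SiegelH2 {Y : Matrix (Fin 2) (Fin 2) ℝ} (hY : Y.PosDef) :
    Complex.I • Y.map (↑) ∈ SiegelH2 := by
  refine ⟨?_, by rwa [map_im_I_smul]⟩
  rw [Matrix.transpose_smul, ← Matrix.transpose_map, ← Matrix.conjTranspose_eq_transpose_of_trivial,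
    hY.isHermitian.eq]

open scoped ComplexOrder in
lemma Pv_I_smul_pos {Y : Matrix (Fin 2) (Fin 2) ℝ} (hY : Y.PosDef) (k : Fin 5) :
    0 < Pv k (Complex.I • Y.map (↑)) := by
  have hΘ (a : Fin 2 → ℤ) : 0 < Θf a (Complex.I • Y.map (↑)) := by
    rw [Θf_eq_secondOrderTheta]
    exact secondOrderTheta_I_smul_pos hY a
  have h₀₀ := hΘ ![0, 0]
  have h₀₁ := hΘ ![0, 1]
  have h₁₀ := hΘ ![1, 0]
  have h₁₁ := hΘ ![1, 1]
  have hP0 := add_pos (add_pos (add_pos (pow_pos h₀₀ 4) (pow_pos h₀₁ 4)) (pow_pos h₁₀ 4))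
    (pow_pos h₁₁ 4)
  have hP_quadratic {u v w x : ℂ} (hu : 0 < u) (hv : 0 < v) (hw : 0 < w) (hx : 0 < x) :
      0 < 2 * (u ^ 2 * v ^ 2 + w ^ 2 * x ^ 2) := by positivity
  have hP4 := mul_pos (four_pos (α := ℂ)) (mul_pos (mul_pos (mul_pos h₀₀ h₀₁) h₁₀) h₁₁)
  fin_cases k
  exacts [hP0, hP_quadratic h₀₀ h₀₁ h₁₀ h₁₁, hP_quadratic h₀₀ h₁₀ h₀₁ h₁₁,
    hP_quadratic h₀₀ h₁₁ h₀₁ h₁₀, hP4]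

open scoped ComplexOrder in
theorem linearIndependent_Pv : LinearIndependent ℂ fun k (τ : SiegelH2) => Pv k τ.1 := by
  refine linearIndependent_of_joint_eigenvectors
    (T := fun S => LinearMap.funLeft ℂ ℂ (siegelTranslate S)) (fun S T => ?_)
    neg_one_zpow_signExponent_injective (fun k S => ?_) fun k hk => ?_
  · ext f τ
    exact congrArg f (siegelTranslate_comm T S τ)
  · ext τ
    exact Pv_add S.2 τ.1 k
  · exact (Pv_I_smul_pos Matrix.PosDef.one k).ne'
      (congrFun hk ⟨_, I_smul_mem_SiegelH2 Matrix.PosDef.one⟩)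

/-- the span of the ten functions `θ⁴[δ]` on `H₂` has dimension exactly 5. -/
theorem statement1 :
    Module.finrank ℂ ↥(Submodule.span ℂ
      (Set.range fun d : Fin 10 => fun τ : SiegelH2 => theta (δev d) τ.1 ^ 4)) = 5 := by
  have hexpand : (fun d : Fin 10 => fun τ : SiegelH2 => theta (δev d) τ.1 ^ 4) =
      fun d => ∑ k, thetaFourMatrix d k • fun τ : SiegelH2 => Pv k τ.1 := by
    ext d τ
    simpa [Finset.sum_apply] using theta_pow_four τ.2 d
  rw [hexpand, finrank_span_range_sum_smul _ linearIndependent_Pv, rank_thetaFourMatrix]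

end TwoLoop
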